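/- Let n ≥ 1 be an integer, p a prime and k ≥ 1. For any function f : (ℤ/p^kℤ)ⁿ → ℕ that is not identically zero one has ∑_{x ∈ (ℤ/p^kℤ)ⁿ} f(x)ⁿ ≥ C · |ℙ(ℤ/p^kℤ)^{n-1}|^{-1} · ∑_{u ∈ ℙ(ℤ/p^kℤ)^{n-1}} f*(u)ⁿ, where C = 1 / ( 2·⌈log_p(max_u f*(u)) + log_p(n)⌉ )ⁿ. -/

import Mathlib

/-- A vector in `(ℤ/Nℤ)ⁿ` is primitive (for `N = p^k`: some coordinate is a unit). -/
def IsPrimitiveVec {N n : ℕ} (u : Fin n → ZMod N) : Prop :=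
  ∃ v : Fin n → ZMod N, ∑ i, v i * u i = 1

/-- `P` is a fixed set of representatives for the projective space `ℙ(ℤ/Nℤ)^{n-1}`. -/
def IsProjRepSet (N n : ℕ) [NeZero N] (P : Finset (Fin n → ZMod N)) : Prop :=
  (∀ u ∈ P, IsPrimitiveVec u) ∧
  ∀ u : Fin n → ZMod N, IsPrimitiveVec u →
    ∃! w, w ∈ P ∧ ∃ c : (ZMod N)ˣ, u = (c : ZMod N) • w

/-- The maximal function of `f : (ℤ/Nℤ)ⁿ → ℕ` in direction `u`:
the largest sum of `f` over a line in direction `u`. -/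
def fstar {N n : ℕ} [NeZero N] (f : (Fin n → ZMod N) → ℕ) (u : Fin n → ZMod N) : ℕ :=
  Finset.univ.sup fun a : Fin n → ZMod N => ∑ t : ZMod N, f (a + t • u)

/-!
Fix a large `K`. A direction `v` modulo `p ^ K` and an index `i` give the row
`b ↦ (⟨v, b⟩ choose i) mod p` indexed by `b ∈ (ℤ/p^Kℤ)ⁿ`.

*Upper bound.* Let `ζ` be a primitive `p ^ k`-th root of unity, which reduces to `1` modulo the
prime above `p` in `ℤ[ζ]`. If a polynomial `G` over `ℤ[ζ]` vanishes to order `F x` at every torus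
point `ζ ^ x`, its restriction to the curve `X ↦ ζ ^ a * X ^ v` is divisible by
`∏ t, (X - ζ ^ t) ^ F (a + t • v)`, which reduces to `(X - 1) ^ M` with `M = ∑ t, F (a + t • v)`.
So for `i < M` the row of `(v, i)` is the reduction of a functional that is killed by the vanishing
conditions, and independent rows with `i < F* v` are at most as many as these conditions.

*Lower bound.* For `M ≤ p ^ L`, pairing the rows with `q`-analogues of the Newton polynomials, where
`q = 1 + X`, shows that the rows with `i < M` span a space of dimension at least the number of
monomials of degree less than `⌈M / L⌉`; the loss of a factor `L` is the order of vanishing at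
`X = 0` of the `q`-falling factorials in characteristic `p`.

Both bounds are applied to one basis of the rows, chosen greedily in order of increasing `i`, and
`F = n * f`. Averaging over the general linear group, which permutes the directions transitively,
turns the upper bounds for its translates into a bound for the sum over projective space.
-/

open Finset

section Exponents

variable {ι : Type*} [Fintype ι] [DecidableEq ι]

/-- The exponents `j` of the monomials of degree `< s` in the variables `ι`. -/
def exponentsDegreeLT (ι : Type*) [Fintype ι] [DecidableEq ι] (s : ℕ) : Finset (ι →₀ ℕ) :=
  (range s).biUnion fun d => univ.finsuppAntidiag d

lemma mem_exponentsDegreeLT {s : ℕ} {j : ι →₀ ℕ} :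
    j ∈ exponentsDegreeLT ι s ↔ j.degree < s := by
  simp [exponentsDegreeLT, Finsupp.degree_eq_sum]

lemma card_exponentsDegreeLT_succ (s : ℕ) :
    #(exponentsDegreeLT ι (s + 1)) = (s + Fintype.card ι).choose (Fintype.card ι) := by
  have hdisj : Set.PairwiseDisjoint (range (s + 1) : Set ℕ)
      fun d => (univ : Finset ι).finsuppAntidiag d := by
    intro d _ e _ hde
    refine disjoint_left.mpr fun j hd he => hde ?_
    rw [mem_finsuppAntidiag] at hd he
    exact hd.1.symm.trans he.1
  rw [exponentsDegreeLT, card_biUnion hdisj]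
  simp_rw [card_finsuppAntidiag_nat_eq_multichoose, card_univ]
  rw [Nat.sum_range_multichoose, add_comm s, Nat.choose_symm_add]

lemma pow_card_le_card_exponentsDegreeLT [Nonempty ι] (s : ℕ) :
    s ^ Fintype.card ι ≤ (Fintype.card ι).factorial * #(exponentsDegreeLT ι s) := by
  rcases s with _ | s
  · simp
  · rw [card_exponentsDegreeLT_succ, ← Nat.ascFactorial_eq_factorial_mul_choose]
    exact Nat.pow_succ_le_ascFactorial _ _

lemma card_exponentsDegreeLT_mul_le [Nonempty ι] (r : ℕ) :
    (Fintype.card ι).factorial * #(exponentsDegreeLT ι (Fintype.card ι * r)) ≤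
      (2 * Fintype.card ι * r) ^ Fintype.card ι := by
  rcases Nat.eq_zero_or_pos r with rfl | hr
  · simp [exponentsDegreeLT]
  · have hle : Fintype.card ι ≤ Fintype.card ι * r := Nat.le_mul_of_pos_right _ hr
    obtain ⟨s, hs⟩ := Nat.exists_eq_succ_of_ne_zero
      (Nat.mul_pos (Fintype.card_pos (α := ι)) hr).ne'
    rw [hs, card_exponentsDegreeLT_succ, ← Nat.ascFactorial_eq_factorial_mul_choose]
    refine (Nat.ascFactorial_le_pow_add _ _).trans (Nat.pow_le_pow_left ?_ _)
    rw [mul_assoc, hs]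
    lia

end Exponents

section LinearAlgebra

/-- Adding the vectors in order of increasing weight, keep those outside the span of the vectors
kept before. -/
lemma exists_linearIndepOn_mem_span_weight_le {K V X α : Type*} [DivisionRing K] [AddCommGroup V]
    [Module K V] [LinearOrder α] (v : X → V) (w : X → α) (S : Finset X) :
    ∃ B ⊆ S, LinearIndepOn K v (B : Set X) ∧
      ∀ x ∈ S, v x ∈ Submodule.span K (v '' {b | b ∈ B ∧ w b ≤ w x}) := by
  classical
  induction S using induction_on_max_value w with
  | empty => exact ⟨∅, by simp, by simp, by simp⟩
  | insert a S _ hmax ih =>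
    obtain ⟨B, hBS, hB, hspan⟩ := ih
    by_cases ha : v a ∈ Submodule.span K (v '' B)
    · refine ⟨B, hBS.trans (subset_insert a S), hB, forall_mem_insert _ _ _ |>.mpr ⟨?_, hspan⟩⟩
      rwa [show {b | b ∈ B ∧ w b ≤ w a} = (B : Set X) from
        Set.ext fun b => and_iff_left_of_imp fun hb => hmax b (hBS hb)]
    · refine ⟨insert a B, insert_subset_insert a hBS, ?_, forall_mem_insert _ _ _ |>.mpr
        ⟨Submodule.subset_span ⟨a, by simp, rfl⟩, fun x hx => ?_⟩⟩
      · rw [coe_insert]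
        exact hB.insert ha
      · refine Submodule.span_mono (Set.image_mono fun b hb => ?_) (hspan x hx)
        exact ⟨mem_insert_of_mem hb.1, hb.2⟩

lemma card_le_card_of_linearIndepOn_mem_span {K V ι κ : Type*} [DivisionRing K] [AddCommGroup V]
    [Module K V] {v : ι → V} {w : κ → V} {s : Finset ι} {t : Finset κ} (hv : LinearIndepOn K v s)
    (hspan : ∀ i ∈ s, v i ∈ Submodule.span K (w '' t)) : #s ≤ #t := by
  classical
  rw [← coe_image] at hspan
  have hle := linearIndependent_le_span_aux' _ hv (t.image w : Set V) ?_
  · simpa using hle.trans (by simpa using card_image_le)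
  · rintro _ ⟨i, rfl⟩
    exact hspan i i.2

lemma linearIndependent_of_triangular {K V ι α : Type*} [Field K] [AddCommGroup V] [Module K V]
    [PartialOrder α] {v : ι → V} {key : ι → α} (hkey : Function.Injective key)
    (ψ : ι → Module.Dual K V) (hdiag : ∀ i, ψ i (v i) ≠ 0)
    (htri : ∀ i j, ψ i (v j) ≠ 0 → key i ≤ key j) : LinearIndependent K v := by
  classical
  rw [linearIndependent_iff]
  intro c hc
  by_contra hne
  obtain ⟨i, hi, hmax⟩ := c.support.exists_maximalFor key (Finsupp.support_nonempty_iff.mpr hne)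
  have hsum : ∑ j ∈ c.support, c j * ψ i (v j) = 0 := by
    simpa [Finsupp.linearCombination_apply, Finsupp.sum] using congrArg (ψ i) hc
  rw [sum_eq_single_of_mem i hi] at hsum
  · exact mul_ne_zero (Finsupp.mem_support_iff.mp hi) (hdiag i) hsum
  · intro j hj hji
    by_contra hj0
    have hij := htri i j (right_ne_zero_of_mul hj0)
    exact hji (hkey (le_antisymm (hmax hj hij) hij))

lemma exists_matrix_mul_eq_one_of_linearIndependent_row {K m n : Type*} [Field K] [Finite m]
    [DecidableEq m] [Fintype n] {M : Matrix m n K} (h : LinearIndependent K M.row) :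
    ∃ B : Matrix n m K, M * B = 1 := by
  cases nonempty_fintype m
  rw [← Matrix.mulVec_surjective_iff_exists_right_inverse]
  refine (LinearMap.range_eq_top (f := M.mulVecLin)).mp (Submodule.eq_top_of_finrank_eq ?_)
  rw [← Matrix.rank, h.rank_matrix, Module.finrank_fintype_fun_eq_card]

/-- Lift a right inverse of the matrix `φ (D (e b) r)` to `O`: this gives vectors `y s` such that
the determinant of `D (y s) r` is `1` modulo `ker φ`, so `D`, and with it `A`, is injective on their
span. -/
lemma card_le_card_of_ker_le_ker {O K V ι β γ : Type*} [CommRing O] [IsDomain O] [Field K]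
    [AddCommGroup V] [Module O V] [Fintype ι] [Finite β] [Fintype γ]
    (A : V →ₗ[O] γ → O) (D : V →ₗ[O] ι → O) (hker : LinearMap.ker A ≤ LinearMap.ker D)
    (φ : O →+* K) (hφ : Function.Surjective φ) (e : β → V)
    (h : LinearIndependent K fun r b => φ (D (e b) r)) : Fintype.card ι ≤ Fintype.card γ := by
  classical
  cases nonempty_fintype β
  obtain ⟨Z, hZ⟩ := exists_matrix_mul_eq_one_of_linearIndependent_row
    (M := Matrix.of fun r b => φ (D (e b) r)) h
  choose lift hlift using hφ
  let y : ι → V := fun s => ∑ b, lift (Z b s) • e b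
  let E : Matrix ι ι O := Matrix.of fun r s => D (y s) r
  have hE : φ.mapMatrix E = 1 := by
    rw [← hZ]
    ext r s
    simp [E, y, Matrix.mul_apply, hlift, mul_comm]
  have hdet : E.det ≠ 0 := by
    intro h0
    have hdetE := congrArg Matrix.det hE
    rw [← RingHom.map_det, h0, map_zero, Matrix.det_one] at hdetE
    exact zero_ne_one hdetE
  refine card_le_of_injective O (A ∘ₗ Fintype.linearCombination O y) ?_
  rw [← LinearMap.ker_eq_bot, LinearMap.ker_eq_bot']
  intro c hc
  refine Matrix.eq_zero_of_mulVec_eq_zero hdet ?_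
  have hD : D (Fintype.linearCombination O y c) = 0 := hker hc
  rw [← hD]
  ext r
  simp [E, Matrix.mulVec, dotProduct, Fintype.linearCombination_apply, mul_comm]

end LinearAlgebra

section QFalling

open Polynomial

lemma natTrailingDegree_prod_of_ne_zero {R ι : Type*} [CommRing R] [IsDomain R] (s : Finset ι)
    (f : ι → R[X]) (h : ∀ i ∈ s, f i ≠ 0) :
    (∏ i ∈ s, f i).natTrailingDegree = ∑ i ∈ s, (f i).natTrailingDegree := by
  classical
  induction s using Finset.induction_on with
  | empty => simp
  | insert a s ha ih =>
    obtain ⟨h₁, h₂⟩ := forall_mem_insert _ _ _ |>.mp h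
    rw [prod_insert ha, sum_insert ha, natTrailingDegree_mul h₁ (prod_ne_zero_iff.mpr h₂), ih h₂]

lemma one_add_X_pow_ne_zero (R : Type*) [CommRing R] [Nontrivial R] (d : ℕ) :
    (1 + X : R[X]) ^ d ≠ 0 := by
  intro h
  simpa [coeff_one_add_X_pow] using congrArg (coeff · 0) h

lemma one_add_X_pow_sub_one_ne_zero (R : Type*) [CommRing R] [Nontrivial R] {d : ℕ} (hd : d ≠ 0) :
    (1 + X : R[X]) ^ d - 1 ≠ 0 := by
  intro h
  have hcoeff := congrArg (coeff · d) (sub_eq_zero.mp h)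
  simp [coeff_one_add_X_pow, coeff_one, hd] at hcoeff

lemma natTrailingDegree_one_add_X_pow_sub_one_le_one (R : Type*) [CommRing R] (p : ℕ) [CharP R p]
    {d : ℕ} (hd : ¬p ∣ d) : ((1 + X : R[X]) ^ d - 1).natTrailingDegree ≤ 1 := by
  refine natTrailingDegree_le_of_ne_zero ?_
  rw [coeff_sub, coeff_one_add_X_pow]
  simpa [coeff_one, CharP.cast_eq_zero_iff R p] using hd

lemma natTrailingDegree_one_add_X_pow_sub_one_le (R : Type*) [CommRing R] [IsDomain R] (p : ℕ)
    [Fact p.Prime] [CharP R p] {L d : ℕ} (hd : d ≠ 0) (hdL : d < p ^ L) :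
    ((1 + X : R[X]) ^ d - 1).natTrailingDegree ≤
      ∑ s ∈ range L, if p ^ s ∣ d then p ^ s else 0 := by
  have hp : p.Prime := Fact.out
  obtain ⟨s, e, he, rfl⟩ := Nat.exists_eq_pow_mul_and_not_dvd hd p hp.ne_one
  have he0 : e ≠ 0 := right_ne_zero_of_mul hd
  have hsL : s < L := (Nat.pow_lt_pow_iff_right hp.one_lt).mp
    ((Nat.le_mul_of_pos_right _ (Nat.pos_of_ne_zero he0)).trans_lt hdL)
  calc ((1 + X : R[X]) ^ (p ^ s * e) - 1).natTrailingDegree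
      = (∏ _i ∈ range (p ^ s), ((1 + X : R[X]) ^ e - 1)).natTrailingDegree := by
        rw [prod_const, card_range, sub_pow_char_pow, one_pow, ← pow_mul, mul_comm]
    _ = p ^ s * ((1 + X : R[X]) ^ e - 1).natTrailingDegree := by
        rw [natTrailingDegree_prod_of_ne_zero _ _ fun _ _ => one_add_X_pow_sub_one_ne_zero R he0,
          sum_const, card_range, smul_eq_mul]
    _ ≤ p ^ s * 1 :=
        Nat.mul_le_mul_left _ (natTrailingDegree_one_add_X_pow_sub_one_le_one R p he)
    _ = if p ^ s ∣ p ^ s * e then p ^ s else 0 := by simp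
    _ ≤ _ := single_le_sum (f := fun t => if p ^ t ∣ p ^ s * e then p ^ t else 0)
        (fun _ _ => Nat.zero_le _) (mem_range.mpr hsL)

lemma sum_sum_pow_dvd_le (p L j : ℕ) :
    ∑ d ∈ range j, ∑ s ∈ range L, (if p ^ s ∣ d + 1 then p ^ s else 0) ≤ L * j := by
  rw [sum_comm, ← smul_eq_mul, ← card_range L]
  refine (sum_le_card_nsmul _ _ _ fun s _ => ?_).trans_eq (by rw [card_range])
  rw [← sum_filter, sum_const, Nat.card_multiples, smul_eq_mul]
  exact Nat.div_mul_le_self j _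

/-- The `q`-analogue `∏_{l < j} (q ^ t - q ^ l)` of the falling factorial `t (t - 1) ⋯ (t - j + 1)`,
as a polynomial in `X = q - 1`. -/
noncomputable def qFalling (R : Type*) [CommRing R] (t j : ℕ) : R[X] :=
  ∏ l ∈ range j, ((1 + X) ^ t - (1 + X) ^ l)

lemma qFalling_eq_zero_of_lt (R : Type*) [CommRing R] {t j : ℕ} (h : t < j) :
    qFalling R t j = 0 :=
  prod_eq_zero (mem_range.mpr h) (sub_self _)

lemma qFalling_self_eq (R : Type*) [CommRing R] (t : ℕ) :
    qFalling R t t = ∏ d ∈ range t, ((1 + X) ^ (t - 1 - d) * ((1 + X) ^ (d + 1) - 1)) := by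
  rw [qFalling, ← prod_range_reflect]
  refine prod_congr rfl fun d hd => ?_
  rw [mul_sub, ← pow_add, mul_one]
  congr 2
  have := mem_range.mp hd
  lia

lemma qFalling_self_ne_zero (R : Type*) [CommRing R] [IsDomain R] (t : ℕ) :
    qFalling R t t ≠ 0 := by
  rw [qFalling_self_eq, prod_ne_zero_iff]
  exact fun d _ => mul_ne_zero (one_add_X_pow_ne_zero R _)
    (one_add_X_pow_sub_one_ne_zero R d.succ_ne_zero)

lemma natTrailingDegree_qFalling_self_le (R : Type*) [CommRing R] [IsDomain R] (p : ℕ)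
    [Fact p.Prime] [CharP R p] {L t : ℕ} (ht : t < p ^ L) :
    (qFalling R t t).natTrailingDegree ≤ L * t := by
  have hunit (d : ℕ) : ((1 + X : R[X]) ^ d).natTrailingDegree = 0 :=
    Nat.le_zero.mp (natTrailingDegree_le_of_ne_zero (by simp [coeff_one_add_X_pow]))
  have hne (d : ℕ) := one_add_X_pow_sub_one_ne_zero R d.succ_ne_zero
  have hmul (d : ℕ) := mul_ne_zero (one_add_X_pow_ne_zero R (t - 1 - d)) (hne d)
  rw [qFalling_self_eq, natTrailingDegree_prod_of_ne_zero _ _ fun d _ => hmul d]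
  refine (sum_le_sum fun d hd => ?_).trans (sum_sum_pow_dvd_le p L t)
  rw [natTrailingDegree_mul (one_add_X_pow_ne_zero R _) (hne d), hunit, zero_add]
  exact natTrailingDegree_one_add_X_pow_sub_one_le R p d.succ_ne_zero
    ((Nat.succ_le_of_lt (mem_range.mp hd)).trans_lt ht)

end QFalling

section ChooseRow

open Polynomial

lemma cast_choose_mod_pow (p : ℕ) [Fact p.Prime] {K i : ℕ} (hi : i < p ^ K) (e : ℕ) :
    ((e % p ^ K).choose i : ZMod p) = e.choose i := by
  have hperiod : Function.Periodic (fun e : ℕ => (e.choose i : ZMod p)) (p ^ K) := fun e => by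
    simp only [← coeff_one_add_X_pow (ZMod p)]
    rw [pow_add, add_pow_char_pow, one_pow, mul_add, mul_one, coeff_add, coeff_mul_X_pow',
      if_neg hi.not_ge, add_zero]
  exact hperiod.map_mod_nat e

/-- The function `b ↦ (⟨v, b⟩ choose i)` modulo `p`, the coefficient of `X ^ i` in
`(1 + X) ^ ⟨v, b⟩`. The representative `0 ≤ ⟨v, b⟩ < Q` is used. -/
def chooseRow (p : ℕ) {Q : ℕ} {ι : Type*} [Fintype ι] (v : ι → ZMod Q) (i : ℕ) :
    (ι → ZMod Q) → ZMod p :=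
  fun b => ((v ⬝ᵥ b).val.choose i : ZMod p)

section Pairing

variable {p K : ℕ} [Fact p.Prime] {ι : Type*} [Fintype ι]

lemma chooseRow_natCast {i : ℕ} (hi : i < p ^ K) (v b : ι → ℕ) :
    chooseRow p (fun l => (v l : ZMod (p ^ K))) i (fun l => (b l : ZMod (p ^ K))) =
      ((∑ l, v l * b l).choose i : ZMod p) := by
  rw [chooseRow, ← cast_choose_mod_pow p hi (∑ l, v l * b l), ← ZMod.val_natCast]
  simp [dotProduct]

/-- The restriction `G ↦ G((1 + X) ^ v)` of a polynomial to the curve with exponents `v`. -/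
noncomputable def powSubst (R : Type*) [CommRing R] (v : ι → ℕ) : MvPolynomial ι R →ₐ[R] R[X] :=
  MvPolynomial.aeval fun l => (1 + X) ^ v l

/-- The functional on functions on `(ℤ/Qℤ)^ι` that pairs the monomial with exponent `b` with the
evaluation at the residue class of `b`. -/
noncomputable def coeffPairing {R : Type*} [CommRing R] (Q : ℕ) (G : MvPolynomial ι R) :
    Module.Dual R ((ι → ZMod Q) → R) :=
  ∑ b ∈ G.support, G.coeff b • LinearMap.proj fun l => (b l : ZMod Q)

lemma coeffPairing_chooseRow {i : ℕ} (hi : i < p ^ K) (v : ι → ℕ) (G : MvPolynomial ι (ZMod p)) :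
    coeffPairing (p ^ K) G (chooseRow p (fun l => (v l : ZMod (p ^ K))) i) =
      (powSubst (ZMod p) v G).coeff i := by
  rw [powSubst, MvPolynomial.aeval_def, MvPolynomial.eval₂_eq', finsetSum_coeff, coeffPairing,
    LinearMap.sum_apply]
  refine sum_congr rfl fun b _ => ?_
  simp_rw [LinearMap.smul_apply, LinearMap.proj_apply, chooseRow_natCast hi, ← pow_mul,
    prod_pow_eq_pow_sum, ← C_eq_algebraMap, coeff_C_mul, coeff_one_add_X_pow, smul_eq_mul]

end Pairing

section QNewton

variable {m : ℕ}

/-- The `q`-analogue of Newton's interpolation polynomial with exponent `j`, where the variable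
`X 0` plays the role of `q`. -/
noncomputable def qNewton (R : Type*) [CommRing R] (j : Fin (m + 1) →₀ ℕ) :
    MvPolynomial (Fin (m + 1)) R :=
  (MvPolynomial.X 0 - 1) ^ j 0 *
    ∏ i : Fin m, ∏ l ∈ range (j i.succ), (MvPolynomial.X i.succ - MvPolynomial.X 0 ^ l)

lemma powSubst_qNewton (R : Type*) [CommRing R] (t : Fin m → ℕ) (j : Fin (m + 1) →₀ ℕ) :
    powSubst R (Fin.cons 1 t) (qNewton R j) = (∏ i, qFalling R (t i) (j i.succ)) * X ^ j 0 := by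
  simp [powSubst, qNewton, qFalling, mul_comm]

variable (R : Type*) [CommRing R]

/-- The order of vanishing at `X = 0` of `∏ i, qFalling R (t i) (t i)`. -/
noncomputable def qFallingOrder (t : Fin m → ℕ) : ℕ :=
  (∏ i, qFalling R (t i) (t i)).natTrailingDegree

lemma qFallingOrder_le [IsDomain R] (p : ℕ) [Fact p.Prime] [CharP R p] {L : ℕ} {t : Fin m → ℕ}
    (ht : ∀ i, t i < p ^ L) : qFallingOrder R t ≤ L * ∑ i, t i := by
  rw [qFallingOrder, natTrailingDegree_prod_of_ne_zero _ _ fun i _ => qFalling_self_ne_zero R _,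
    mul_sum]
  exact sum_le_sum fun i _ => natTrailingDegree_qFalling_self_le R p (ht i)

lemma coeff_powSubst_qNewton_self_ne_zero [IsDomain R] (j : Fin (m + 1) →₀ ℕ) :
    (powSubst R (Fin.cons 1 (Finsupp.tail j)) (qNewton R j)).coeff
      (qFallingOrder R (Finsupp.tail j) + j 0) ≠ 0 := by
  rw [powSubst_qNewton, coeff_mul_X_pow]
  exact coeff_natTrailingDegree_ne_zero.mpr
    (prod_ne_zero_iff.mpr fun i _ => qFalling_self_ne_zero R (j i.succ))

lemma toLex_le_of_coeff_powSubst_qNewton_ne_zero {j j' : Fin (m + 1) →₀ ℕ}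
    (h : (powSubst R (Fin.cons 1 (Finsupp.tail j')) (qNewton R j)).coeff
      (qFallingOrder R (Finsupp.tail j') + j' 0) ≠ 0) :
    toLex (⇑(Finsupp.tail j), j 0) ≤ toLex (⇑(Finsupp.tail j'), j' 0) := by
  rw [powSubst_qNewton] at h
  have htail : ⇑(Finsupp.tail j) ≤ ⇑(Finsupp.tail j') := fun i => by
    by_contra! hlt
    exact h (by rw [prod_eq_zero (mem_univ i) (qFalling_eq_zero_of_lt R hlt), zero_mul, coeff_zero])
  refine Prod.Lex.toLex_le_toLex.mpr (htail.lt_or_eq.imp_right fun heq => ⟨heq, ?_⟩)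
  refine not_lt.mp fun hlt : j' 0 < j 0 => h ?_
  rw [← show ⇑(Finsupp.tail j) = ⇑(Finsupp.tail j') from heq, coeff_mul_X_pow']
  split_ifs
  · exact coeff_eq_zero_of_lt_natTrailingDegree (show _ < qFallingOrder R _ by lia)
  · rfl

end QNewton

/-- The row `chooseRow v i` attached to the exponent `j`: its direction is `v = (1, tail j)`, and
`i` is the order of vanishing of the `q`-Newton polynomial of `j` restricted to `(1 + X) ^ v`. -/
noncomputable def newtonRow (p Q : ℕ) [Fact p.Prime] {m : ℕ} (j : Fin (m + 1) →₀ ℕ) :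
    (Fin (m + 1) → ZMod Q) × ℕ :=
  (fun l => ((Fin.cons 1 (Finsupp.tail j) : Fin (m + 1) → ℕ) l : ZMod Q),
    qFallingOrder (ZMod p) (Finsupp.tail j) + j 0)

lemma newtonRow_snd_lt {p Q L M s m : ℕ} [Fact p.Prime] (hL : L ≠ 0) (hML : M ≤ p ^ L)
    (hs : ∀ d < s, L * d < M) {j : Fin (m + 1) →₀ ℕ} (hj : j.degree < s) :
    (newtonRow p Q j).2 < M := by
  have hdeg : j.degree = j 0 + ∑ i, Finsupp.tail j i := by
    rw [Finsupp.degree_eq_sum, Fin.sum_univ_succ]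
    rfl
  have hle (d : ℕ) : d ≤ L * d := Nat.le_mul_of_pos_left _ (Nat.pos_of_ne_zero hL)
  have hlt := hs _ hj
  have htail (i : Fin m) : Finsupp.tail j i < p ^ L := by
    have := single_le_sum (f := Finsupp.tail j) (fun _ _ => Nat.zero_le _) (mem_univ i)
    have := hle j.degree
    lia
  calc (newtonRow p Q j).2 ≤ L * ∑ i, Finsupp.tail j i + L * j 0 :=
        add_le_add (qFallingOrder_le (ZMod p) p htail) (hle _)
    _ < M := by rwa [← mul_add, add_comm, ← hdeg]

lemma linearIndepOn_newtonRow {p K m : ℕ} [Fact p.Prime] {S : Set (Fin (m + 1) →₀ ℕ)}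
    (hS : ∀ j ∈ S, (newtonRow p (p ^ K) j).2 < p ^ K) :
    LinearIndepOn (ZMod p) (fun j => Function.uncurry (chooseRow p) (newtonRow p (p ^ K) j)) S := by
  have hpair (i j : S) : coeffPairing (p ^ K) (qNewton (ZMod p) i.1)
      (Function.uncurry (chooseRow p) (newtonRow p (p ^ K) j.1)) =
      (powSubst (ZMod p) (Fin.cons 1 (Finsupp.tail j.1)) (qNewton (ZMod p) i.1)).coeff
        (qFallingOrder (ZMod p) (Finsupp.tail j.1) + j.1 0) :=
    coeffPairing_chooseRow (hS j j.2) _ _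
  refine linearIndependent_of_triangular
    (key := fun j : S => toLex (⇑(Finsupp.tail j.1), j.1 0)) (fun i j hij => ?_)
    (fun i => coeffPairing (p ^ K) (qNewton (ZMod p) i.1)) (fun i => ?_) fun i j => ?_
  · obtain ⟨htail, h0⟩ := Prod.mk.inj (toLex.injective hij)
    ext l
    exact Fin.cases h0 (congrFun htail) l
  · rw [hpair]
    exact coeff_powSubst_qNewton_self_ne_zero (ZMod p) i.1
  · rw [hpair]
    exact toLex_le_of_coeff_powSubst_qNewton_ne_zero (ZMod p)

end ChooseRow

section Multiplicity

open Polynomial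

lemma exists_isPrimitiveRoot_map_eq_one (p : ℕ) [Fact p.Prime] {k : ℕ} (hk : k ≠ 0) :
    ∃ (O : Type) (_ : CommRing O) (_ : IsDomain O) (z : O) (φ : O →+* ZMod p),
      IsPrimitiveRoot z (p ^ k) ∧ φ z = 1 := by
  let Φ := cyclotomic (p ^ k) ℤ
  have hpos : 0 < p ^ k := pow_pos (Fact.out : p.Prime).pos k
  have hdom : IsDomain (AdjoinRoot Φ) :=
    AdjoinRoot.isDomain_of_prime (cyclotomic.irreducible hpos).prime
  have hchar : CharZero (AdjoinRoot Φ) := by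
    refine charZero_of_injective_ringHom (AdjoinRoot.of.injective_of_degree_ne_zero ?_)
    rw [degree_cyclotomic]
    exact_mod_cast (Nat.totient_pos.mpr hpos).ne'
  have hroot : eval₂ (Int.castRingHom (ZMod p)) 1 Φ = 0 := by
    obtain ⟨j, rfl⟩ := Nat.exists_eq_succ_of_ne_zero hk
    rw [eval₂_eq_eval_map, map_cyclotomic, eval_one_cyclotomic_prime_pow, CharP.cast_eq_zero]
  refine ⟨AdjoinRoot Φ, inferInstance, hdom, AdjoinRoot.root Φ,
    AdjoinRoot.lift (Int.castRingHom (ZMod p)) 1 hroot, ?_, AdjoinRoot.lift_root hroot⟩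
  have : NeZero ((p ^ k : ℕ) : AdjoinRoot Φ) := ⟨by exact_mod_cast hpos.ne'⟩
  rw [← isRoot_cyclotomic_iff, IsRoot.def, ← map_cyclotomic (p ^ k) (AdjoinRoot.of Φ),
    ← eval₂_eq_eval_map]
  exact AdjoinRoot.eval₂_root Φ

/-- Over the fraction field the factors are pairwise coprime. -/
lemma prod_X_sub_C_pow_dvd {O ι : Type*} [CommRing O] [IsDomain O] (s : Finset ι) {a : ι → O}
    (ha : Function.Injective a) {e : ι → ℕ} {G : O[X]} (h : ∀ t ∈ s, (X - C (a t)) ^ e t ∣ G) :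
    ∏ t ∈ s, (X - C (a t)) ^ e t ∣ G := by
  let f := algebraMap O (FractionRing O)
  have hf : Function.Injective f := IsFractionRing.injective O _
  rw [← map_dvd_map f hf (monic_prod_of_monic _ _ fun t _ => (monic_X_sub_C _).pow _),
    Polynomial.map_prod]
  refine Finset.prod_dvd_of_coprime (fun t _ t' _ htt' => ?_) fun t ht => map_dvd f (h t ht)
  simpa [Function.onFun] using
    (pairwise_coprime_X_sub_C (hf.comp ha) htt').pow (m := e t) (n := e t')

section TaylorCoeff

variable {O ι : Type*} [CommRing O]

/-- The coefficient of `T ^ α` in the Taylor expansion `G (x + T)`. -/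
noncomputable def taylorCoeff (x : ι → O) (α : ι →₀ ℕ) : MvPolynomial ι O →ₗ[O] O :=
  MvPolynomial.lcoeff O α ∘ₗ
    (MvPolynomial.aeval fun i => MvPolynomial.X i + MvPolynomial.C (x i) :
      MvPolynomial ι O →ₐ[O] MvPolynomial ι O).toLinearMap

lemma pow_dvd_aeval_of_taylorCoeff_eq_zero [Finite ι] {S : Type*} [CommRing S] [Algebra O S]
    {G : MvPolynomial ι O} {x : ι → O} {m : ℕ} (hG : ∀ α, α.degree < m → taylorCoeff x α G = 0)
    {c : ι → S} {d : S} (hc : ∀ i, d ∣ c i - algebraMap O S (x i)) :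
    d ^ m ∣ MvPolynomial.aeval c G := by
  cases nonempty_fintype ι
  have hshift : MvPolynomial.aeval c G = MvPolynomial.aeval (fun i => c i - algebraMap O S (x i))
      (MvPolynomial.aeval (fun i => MvPolynomial.X i + MvPolynomial.C (x i)) G :
        MvPolynomial ι O) := by
    rw [← AlgHom.comp_apply]
    congr 1
    ext i
    simp
  rw [hshift, MvPolynomial.aeval_def, MvPolynomial.eval₂_eq']
  refine dvd_sum fun α _ => ?_
  rcases lt_or_ge α.degree m with hα | hα
  · have hα0 := hG α hα
    rw [taylorCoeff, LinearMap.comp_apply, MvPolynomial.lcoeff_apply,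
      AlgHom.toLinearMap_apply] at hα0
    simp only [hα0, map_zero, zero_mul, dvd_zero]
  · refine Dvd.dvd.mul_left ((pow_dvd_pow d hα).trans ?_) _
    rw [Finsupp.degree_eq_sum, ← prod_pow_eq_pow_sum]
    exact prod_dvd_prod_of_dvd _ _ fun i _ => pow_dvd_pow_of_dvd (hc i) _

end TaylorCoeff

lemma coeff_taylor_X_pow_modByMonic {R : Type*} [CommRing R] (e : ℕ) {i M : ℕ} (hi : i < M) :
    (taylor 1 ((X ^ e : R[X]) %ₘ (X - C 1) ^ M)).coeff i = e.choose i := by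
  have h := congrArg (fun G => (taylor 1 G).coeff i)
    (modByMonic_add_div (X ^ e : R[X]) ((X - C 1) ^ M))
  simp only [map_add, coeff_add, taylor_mul, taylor_pow, map_sub, taylor_X, taylor_C,
    add_sub_cancel_right, coeff_X_pow_mul', if_neg hi.not_ge, add_zero] at h
  rw [h, add_comm X, map_one, coeff_one_add_X_pow]

section Line

variable {O : Type*} [CommRing O] {N n : ℕ}

/-- The image of `x` under the embedding `(ℤ/Nℤ)ⁿ → Oⁿ` given by an `N`-th root of unity `z`. -/
def torusPoint (z : O) (x : Fin n → ZMod N) : Fin n → O :=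
  fun i => z ^ (x i).val

/-- The curve `X ↦ z ^ a * X ^ w`, whose value at `X = z ^ t` is the torus point of `a + t • w`. -/
noncomputable def torusLine (z : O) (a : Fin n → ZMod N) (w : Fin n → ℕ) : Fin n → O[X] :=
  fun i => C (z ^ (a i).val) * X ^ w i

lemma X_sub_C_dvd_torusLine_sub [NeZero N] {z : O} (hz : z ^ N = 1) (a : Fin n → ZMod N)
    (w : Fin n → ℕ) (t : ZMod N) (i : Fin n) :
    (X - C (z ^ t.val)) ∣
      torusLine z a w i - C (torusPoint z (a + t • fun l => (w l : ZMod N)) i) := by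
  have hval : (a + t • fun l => (w l : ZMod N)) i = ((a i).val + t.val * w i : ℕ) := by simp
  rw [dvd_iff_isRoot, torusPoint, hval, ZMod.val_natCast, ← pow_eq_pow_mod _ hz]
  simp [torusLine, pow_add, pow_mul]

variable [NeZero N] (z : O) (F : (Fin n → ZMod N) → ℕ) (a : Fin n → ZMod N)

/-- The polynomial with a root of order `F (a + t • u)` at each `z ^ t`. -/
noncomputable def lineModulus (u : Fin n → ZMod N) : O[X] :=
  ∏ t : ZMod N, (X - C (z ^ t.val)) ^ F (a + t • u)

lemma monic_lineModulus (u : Fin n → ZMod N) : (lineModulus z F a u).Monic :=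
  monic_prod_of_monic _ _ fun _ _ => (monic_X_sub_C _).pow _

lemma map_lineModulus {S : Type*} [CommRing S] {φ : O →+* S} {z : O} (hφ : φ z = 1)
    (u : Fin n → ZMod N) :
    (lineModulus z F a u).map φ = (X - C 1) ^ ∑ t : ZMod N, F (a + t • u) := by
  simp [lineModulus, Polynomial.map_prod, hφ, prod_pow_eq_pow_sum]

/-- The `i`-th Taylor coefficient at `1` of the restriction of a polynomial to `torusLine z a w`,
reduced modulo `lineModulus z F a w`. -/
noncomputable def lineFunctional (w : Fin n → ℕ) (i : ℕ) : MvPolynomial (Fin n) O →ₗ[O] O :=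
  lcoeff O i ∘ₗ taylor 1 ∘ₗ modByMonicHom (lineModulus z F a fun l => (w l : ZMod N)) ∘ₗ
    (MvPolynomial.aeval (torusLine z a w)).toLinearMap

lemma lineFunctional_eq_zero [IsDomain O] {z : O} (hz : IsPrimitiveRoot z N)
    {F : (Fin n → ZMod N) → ℕ} {G : MvPolynomial (Fin n) O}
    (hG : ∀ x α, α.degree < F x → taylorCoeff (torusPoint z x) α G = 0) (w : Fin n → ℕ) (i : ℕ) :
    lineFunctional z F a w i G = 0 := by
  have hinj : Function.Injective fun t : ZMod N => z ^ t.val := fun t t' htt' =>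
    ZMod.val_injective N (hz.pow_inj (ZMod.val_lt t) (ZMod.val_lt t') htt')
  have hdvd : lineModulus z F a (fun l => (w l : ZMod N)) ∣
      MvPolynomial.aeval (torusLine z a w) G :=
    prod_X_sub_C_pow_dvd univ hinj fun t _ => pow_dvd_aeval_of_taylorCoeff_eq_zero (hG _)
      (X_sub_C_dvd_torusLine_sub hz.pow_eq_one a w t)
  simp [lineFunctional, modByMonicHom_apply,
    (modByMonic_eq_zero_iff_dvd (monic_lineModulus z F a _)).mpr hdvd]

lemma map_lineFunctional_monomial {S : Type*} [CommRing S] {φ : O →+* S} {z : O} (hφ : φ z = 1)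
    {w : Fin n → ℕ} {i : ℕ} (hi : i < ∑ t : ZMod N, F (a + t • fun l => (w l : ZMod N)))
    (b : Fin n →₀ ℕ) :
    φ (lineFunctional z F a w i (MvPolynomial.monomial b 1)) = (∑ l, w l * b l).choose i := by
  have hcurve : (MvPolynomial.aeval (torusLine z a w) (MvPolynomial.monomial b (1 : O))).map φ =
      X ^ ∑ l, w l * b l := by
    simp [MvPolynomial.aeval_monomial, Finsupp.prod_fintype, torusLine, Polynomial.map_prod, hφ,
      ← pow_mul, prod_pow_eq_pow_sum]
  rw [lineFunctional, LinearMap.comp_apply, LinearMap.comp_apply, LinearMap.comp_apply,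
    lcoeff_apply, ← coeff_map, map_taylor, map_one, modByMonicHom_apply,
    map_modByMonic _ (monic_lineModulus z F a _), map_lineModulus F a hφ, AlgHom.toLinearMap_apply,
    hcurve, coeff_taylor_X_pow_modByMonic _ hi]

end Line

/-- The rows are the reductions of line functionals that vanish on every polynomial vanishing to
order `F x` at each torus point `x`. -/
lemma card_le_sum_card_exponentsDegreeLT {p k K n : ℕ} [Fact p.Prime] [NeZero (p ^ k)] (hk : k ≠ 0)
    (hkK : p ^ k ∣ p ^ K) (F : (Fin n → ZMod (p ^ k)) → ℕ) {ι : Type*} [Fintype ι]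
    (v : ι → Fin n → ZMod (p ^ K)) (i : ι → ℕ)
    (hrow : LinearIndependent (ZMod p) fun r => chooseRow p (v r) (i r)) (hi : ∀ r, i r < p ^ K)
    (hline : ∀ r, i r < fstar F (ZMod.castHom hkK (ZMod (p ^ k)) ∘ v r)) :
    Fintype.card ι ≤ ∑ x, #(exponentsDegreeLT (Fin n) (F x)) := by
  have : NeZero (p ^ K) := ⟨pow_ne_zero _ (Fact.out : p.Prime).ne_zero⟩
  obtain ⟨O, _, _, z, φ, hz, hφ⟩ := exists_isPrimitiveRoot_map_eq_one p hk
  let w (r : ι) (l : Fin n) : ℕ := (v r l).val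
  have hw (r : ι) : ZMod.castHom hkK (ZMod (p ^ k)) ∘ v r = fun l => (w r l : ZMod (p ^ k)) :=
    funext fun l => (ZMod.natCast_val (v r l)).symm
  have hline' (r : ι) : ∃ a : Fin n → ZMod (p ^ k),
      i r < ∑ t : ZMod (p ^ k), F (a + t • fun l => (w r l : ZMod (p ^ k))) := by
    obtain ⟨a, -, ha⟩ := Finset.lt_sup_iff.mp (hline r)
    exact ⟨a, by rwa [← hw]⟩
  choose a ha using hline'
  let A : MvPolynomial (Fin n) O →ₗ[O]
      ((Σ x : Fin n → ZMod (p ^ k), exponentsDegreeLT (Fin n) (F x)) → O) :=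
    LinearMap.pi fun s => taylorCoeff (torusPoint z s.1) s.2.1
  have hker : LinearMap.ker A ≤
      LinearMap.ker (LinearMap.pi fun r => lineFunctional z F (a r) (w r) (i r)) := fun G hG =>
    funext fun r => lineFunctional_eq_zero (a r) hz
      (fun x α hα => congrFun hG ⟨x, α, mem_exponentsDegreeLT.mpr hα⟩) (w r) (i r)
  have hcard := card_le_card_of_ker_le_ker A _ hker φ (ZMod.ringHom_surjective φ)
    (fun b : Fin n → ZMod (p ^ K) =>
      MvPolynomial.monomial (Finsupp.equivFunOnFinite.symm fun l => (b l).val) 1) ?_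
  · simpa using hcard
  · convert hrow using 2 with r
    funext b
    rw [LinearMap.pi_apply, map_lineFunctional_monomial F (a r) hφ (ha r)]
    simpa [w] using (chooseRow_natCast (hi r) (w r) fun l => (b l).val).symm

end Multiplicity

section LocalRing

open Matrix

variable {R : Type*} [CommRing R] [IsLocalRing R] {n : Type*} [Fintype n]

lemma exists_isUnit_dotProduct_isUnit_dotProduct {a b v w : n → R} (hv : a ⬝ᵥ v = 1)
    (hw : b ⬝ᵥ w = 1) : ∃ χ : n → R, IsUnit (χ ⬝ᵥ v) ∧ IsUnit (χ ⬝ᵥ w) := by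
  have isUnit_one_add {x : R} (hx : ¬IsUnit x) : IsUnit (1 + x) :=
    (IsLocalRing.isUnit_or_isUnit_of_add_one (add_neg_cancel_right 1 x)).resolve_right
      (by rwa [IsUnit.neg_iff])
  by_cases hbv : IsUnit (b ⬝ᵥ v)
  · exact ⟨b, hbv, hw ▸ isUnit_one⟩
  by_cases haw : IsUnit (a ⬝ᵥ w)
  · exact ⟨a, hv ▸ isUnit_one, haw⟩
  refine ⟨a + b, ?_, ?_⟩
  · rw [add_dotProduct, hv]
    exact isUnit_one_add hbv
  · rw [add_dotProduct, hw, add_comm]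
    exact isUnit_one_add haw

/-- With `ψ ⬝ᵥ v = 1` and `ψ ⬝ᵥ w` a unit, the matrix `1 + (w - v) ψᵀ` sends `v` to `w` and has
determinant `ψ ⬝ᵥ w`. -/
lemma exists_GL_mulVec_eq [DecidableEq n] {a b v w : n → R} (hv : a ⬝ᵥ v = 1) (hw : b ⬝ᵥ w = 1) :
    ∃ g : GL n R, g.1 *ᵥ v = w := by
  obtain ⟨χ, ⟨c, hc⟩, hχw⟩ := exists_isUnit_dotProduct_isUnit_dotProduct hv hw
  let ψ : n → R := (↑c⁻¹ : R) • χ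
  have hψv : ψ ⬝ᵥ v = 1 := by rw [smul_dotProduct, ← hc, smul_eq_mul, Units.inv_mul]
  have hψw : IsUnit (ψ ⬝ᵥ w) := by
    rw [smul_dotProduct]
    exact c⁻¹.isUnit.mul hχw
  have hdet : (1 + vecMulVec (w - v) ψ).det = ψ ⬝ᵥ w := by
    rw [vecMulVec_eq Unit, det_one_add_replicateCol_mul_replicateRow, dotProduct_sub, hψv]
    ring
  refine ⟨GeneralLinearGroup.mk'' (1 + vecMulVec (w - v) ψ) (hdet ▸ hψw), ?_⟩
  change (1 + vecMulVec (w - v) ψ) *ᵥ v = w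
  rw [add_mulVec, one_mulVec, vecMulVec_mulVec, hψv, MulOpposite.op_one, one_smul, add_sub_cancel]

lemma exists_GL_map_eq [DecidableEq n] {S : Type*} [CommRing S] [Nontrivial S] {f : R →+* S}
    (hf : Function.Surjective f) (g : GL n S) : ∃ g' : GL n R, GeneralLinearGroup.map f g' = g := by
  have := IsLocalHom.of_surjective f hf
  choose lift hlift using hf
  have hmap : f.mapMatrix (of fun i j => lift (g i j)) = g.1 := by
    ext i j
    simp [hlift]
  have hdet : IsUnit (of fun i j => lift (g i j) : Matrix n n R).det := by
    refine IsUnit.of_map f _ ?_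
    rw [RingHom.map_det, hmap]
    exact isUnits_det_units g
  exact ⟨GeneralLinearGroup.mk'' _ hdet, Units.ext hmap⟩

end LocalRing

lemma isLocalRing_zmod_prime_pow (p : ℕ) [Fact p.Prime] {k : ℕ} (hk : k ≠ 0) :
    IsLocalRing (ZMod (p ^ k)) := by
  have : Fact (1 < p ^ k) := ⟨Nat.one_lt_pow hk (Fact.out : p.Prime).one_lt⟩
  exact IsLocalRing.of_surjective' (PadicInt.toZModPow k) (ZMod.ringHom_surjective _)

section ProjectiveSpace

open Matrix

variable {N n : ℕ}

lemma IsPrimitiveVec.mulVec {u : Fin n → ZMod N} (hu : IsPrimitiveVec u) (g : GL (Fin n) (ZMod N)) :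
    IsPrimitiveVec (g.1 *ᵥ u) := by
  obtain ⟨v, hv⟩ := hu
  refine ⟨v ᵥ* (g⁻¹).1, ?_⟩
  change v ᵥ* (g⁻¹).1 ⬝ᵥ g.1 *ᵥ u = 1
  rw [← dotProduct_mulVec, mulVec_mulVec, ← Units.val_mul, inv_mul_cancel, Units.val_one,
    one_mulVec]
  exact hv

lemma IsPrimitiveVec.map {M : ℕ} {u : Fin n → ZMod N} (hu : IsPrimitiveVec u)
    (φ : ZMod N →+* ZMod M) : IsPrimitiveVec (φ ∘ u) := by
  obtain ⟨v, hv⟩ := hu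
  exact ⟨φ ∘ v, by simpa using congrArg φ hv⟩

variable [NeZero N]

lemma fstar_smul (f : (Fin n → ZMod N) → ℕ) (c : (ZMod N)ˣ) (u : Fin n → ZMod N) :
    fstar f ((c : ZMod N) • u) = fstar f u :=
  sup_congr rfl fun a _ => Fintype.sum_equiv (Units.mulRight c) _ _ fun t => by simp [mul_smul]

lemma fstar_const_mul (c : ℕ) (f : (Fin n → ZMod N) → ℕ) (u : Fin n → ZMod N) :
    fstar (fun x => c * f x) u = c * fstar f u := by
  simp_rw [fstar, ← mul_sum]
  exact (apply_sup_eq_sup_comp (c * ·) (fun x y => (Nat.mul_max_mul_left c x y).symm) rfl).symm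

namespace IsProjRepSet

variable {P : Finset (Fin n → ZMod N)} {A : Type*} [AddCommMonoid A] {h : (Fin n → ZMod N) → A}

lemma sum_mulVec (hP : IsProjRepSet N n P) (hh : ∀ (c : (ZMod N)ˣ) u, h ((c : ZMod N) • u) = h u)
    (g : GL (Fin n) (ZMod N)) : ∑ u ∈ P, h (g.1 *ᵥ u) = ∑ u ∈ P, h u := by
  have hrep (u : Fin n → ZMod N) : ∃ w, IsPrimitiveVec u →
      w ∈ P ∧ ∃ c : (ZMod N)ˣ, u = (c : ZMod N) • w := by
    by_cases hu : IsPrimitiveVec u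
    · exact (hP.2 u hu).exists.imp fun w hw _ => hw
    · exact ⟨u, fun hu' => absurd hu' hu⟩
  choose rep hrep using hrep
  have hmem (u) (hu : u ∈ P) := hrep _ ((hP.1 u hu).mulVec g)
  have hmaps : Set.MapsTo (fun u => rep (g.1 *ᵥ u)) P P := fun u hu => (hmem u hu).1
  have hinj : Set.InjOn (fun u => rep (g.1 *ᵥ u)) P := fun u hu w hw
      (huw : rep (g.1 *ᵥ u) = rep (g.1 *ᵥ w)) => by
    obtain ⟨c, hc⟩ := (hmem u hu).2
    obtain ⟨d, hd⟩ := (hmem w hw).2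
    have hgu : g.1 *ᵥ u = g.1 *ᵥ ((c * d⁻¹ : (ZMod N)ˣ) : ZMod N) • w := by
      rw [mulVec_smul, hc, hd, smul_smul, ← Units.val_mul, inv_mul_cancel_right, huw]
    exact (hP.2 u (hP.1 u hu)).unique ⟨hu, 1, (one_smul _ u).symm⟩
      ⟨hw, _, mulVec_injective_of_isUnit g.isUnit hgu⟩
  refine sum_nbij (fun u => rep (g.1 *ᵥ u)) hmaps hinj
    (surjOn_of_injOn_of_card_le _ hmaps hinj le_rfl) fun u hu => ?_
  obtain ⟨c, hc⟩ := (hmem u hu).2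
  exact (congrArg h hc).trans (hh c _)

/-- Averaging over the transitive action of the general linear group. -/
lemma card_nsmul_sum_GL [IsLocalRing (ZMod N)] [Fintype (GL (Fin n) (ZMod N))]
    (hP : IsProjRepSet N n P) (hh : ∀ (c : (ZMod N)ˣ) u, h ((c : ZMod N) • u) = h u)
    {v : Fin n → ZMod N} (hv : IsPrimitiveVec v) :
    #P • ∑ g : GL (Fin n) (ZMod N), h (g.1 *ᵥ v) =
      Fintype.card (GL (Fin n) (ZMod N)) • ∑ u ∈ P, h u := by
  have horbit (u) (hu : u ∈ P) :
      ∑ g : GL (Fin n) (ZMod N), h (g.1 *ᵥ u) = ∑ g : GL (Fin n) (ZMod N), h (g.1 *ᵥ v) := by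
    obtain ⟨g₀, rfl⟩ := exists_GL_mulVec_eq hv.choose_spec (hP.1 u hu).choose_spec
    exact Fintype.sum_equiv (Equiv.mulRight g₀) _ _ fun g => by simp [mulVec_mulVec]
  rw [← sum_const, ← sum_congr rfl horbit, sum_comm, sum_congr rfl fun g _ => hP.sum_mulVec hh g,
    sum_const, card_univ]

end IsProjRepSet

end ProjectiveSpace

section MaximalFunction

open Matrix

lemma chooseRow_mulVec (p : ℕ) {Q i : ℕ} {ι : Type*} [Fintype ι] (g : Matrix ι ι (ZMod Q))
    (v : ι → ZMod Q) : chooseRow p (g *ᵥ v) i = chooseRow p v i ∘ (gᵀ *ᵥ ·) :=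
  funext fun b => by simp [chooseRow, dotProduct_comm, dotProduct_mulVec, vecMul_transpose]

lemma linearIndependent_chooseRow_mulVec {p Q : ℕ} [Fact p.Prime] {ι κ : Type*} [Fintype ι]
    [DecidableEq ι] {v : κ → ι → ZMod Q} {i : κ → ℕ}
    (h : LinearIndependent (ZMod p) fun r => chooseRow p (v r) (i r)) (g : GL ι (ZMod Q)) :
    LinearIndependent (ZMod p) fun r => chooseRow p (g.1 *ᵥ v r) (i r) := by
  simp_rw [chooseRow_mulVec]
  refine h.map' (LinearMap.funLeft (ZMod p) (ZMod p) (g.1ᵀ *ᵥ ·))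
    (LinearMap.ker_eq_bot.mpr (LinearMap.funLeft_injective_of_surjective _ _ _ ?_))
  exact mulVec_surjective_iff_isUnit.mpr ((isUnit_transpose _).mpr g.isUnit)

section UpperBound

variable {p k K n : ℕ} [Fact p.Prime] [NeZero (p ^ k)] {B : Finset ((Fin n → ZMod (p ^ K)) × ℕ)}

lemma card_filter_lt_fstar_mulVec_le (hk : k ≠ 0) (hkK : p ^ k ∣ p ^ K)
    (hB : LinearIndepOn (ZMod p) (Function.uncurry (chooseRow p))
      (B : Set ((Fin n → ZMod (p ^ K)) × ℕ)))
    (hi : ∀ r ∈ B, r.2 < p ^ K) (F : (Fin n → ZMod (p ^ k)) → ℕ) (g : GL (Fin n) (ZMod (p ^ k))) :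
    #{r ∈ B | r.2 < fstar F (g.1 *ᵥ (ZMod.castHom hkK (ZMod (p ^ k)) ∘ r.1))} ≤
      ∑ x, #(exponentsDegreeLT (Fin n) (F x)) := by
  have hp : p.Prime := Fact.out
  have hK : K ≠ 0 := (Nat.pos_of_ne_zero hk |>.trans_le
    ((Nat.pow_dvd_pow_iff_le_right hp.one_lt).mp hkK)).ne'
  have := isLocalRing_zmod_prime_pow p hK
  have : Fact (1 < p ^ k) := ⟨Nat.one_lt_pow hk hp.one_lt⟩
  obtain ⟨g', rfl⟩ := exists_GL_map_eq (ZMod.castHom_surjective hkK) g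
  rw [← Fintype.card_coe]
  refine card_le_sum_card_exponentsDegreeLT hk hkK F (fun r => g'.1 *ᵥ r.1.1) (fun r => r.1.2)
    (linearIndependent_chooseRow_mulVec (hB.mono (coe_subset.mpr (filter_subset _ B))) g')
    (fun r => hi r (mem_of_mem_filter _ r.2)) fun r => ?_
  rw [show ZMod.castHom hkK (ZMod (p ^ k)) ∘ (g'.1 *ᵥ r.1.1) = _ from
    funext (RingHom.map_mulVec _ _ _)]
  exact (mem_filter.mp r.2).2

lemma sum_card_filter_lt_fstar_le (hk : k ≠ 0) (hkK : p ^ k ∣ p ^ K)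
    (hB : LinearIndepOn (ZMod p) (Function.uncurry (chooseRow p))
      (B : Set ((Fin n → ZMod (p ^ K)) × ℕ)))
    (hi : ∀ r ∈ B, r.2 < p ^ K) (hprim : ∀ r ∈ B, IsPrimitiveVec r.1)
    {P : Finset (Fin n → ZMod (p ^ k))} (hP : IsProjRepSet (p ^ k) n P)
    (F : (Fin n → ZMod (p ^ k)) → ℕ) :
    ∑ u ∈ P, #{r ∈ B | r.2 < fstar F u} ≤ #P * ∑ x, #(exponentsDegreeLT (Fin n) (F x)) := by
  have := isLocalRing_zmod_prime_pow p hk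
  have : Fintype (GL (Fin n) (ZMod (p ^ k))) := Fintype.ofFinite _
  let h (i : ℕ) (u : Fin n → ZMod (p ^ k)) : ℕ := if i < fstar F u then 1 else 0
  have hh (i : ℕ) (c : (ZMod (p ^ k))ˣ) (u : Fin n → ZMod (p ^ k)) :
      h i ((c : ZMod (p ^ k)) • u) = h i u := by
    simp only [h, fstar_smul]
  refine Nat.le_of_mul_le_mul_left (c := Fintype.card (GL (Fin n) (ZMod (p ^ k)))) ?_
    Fintype.card_pos
  calc Fintype.card (GL (Fin n) (ZMod (p ^ k))) * ∑ u ∈ P, #{r ∈ B | r.2 < fstar F u}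
      = ∑ r ∈ B, Fintype.card (GL (Fin n) (ZMod (p ^ k))) • ∑ u ∈ P, h r.2 u := by
        simp_rw [card_filter, h, smul_eq_mul]
        rw [sum_comm, mul_sum]
    _ = ∑ r ∈ B, #P • ∑ g : GL (Fin n) (ZMod (p ^ k)),
          h r.2 (g.1 *ᵥ (ZMod.castHom hkK (ZMod (p ^ k)) ∘ r.1)) :=
        sum_congr rfl fun r hr => (hP.card_nsmul_sum_GL (hh r.2) ((hprim r hr).map _)).symm
    _ = #P * ∑ g : GL (Fin n) (ZMod (p ^ k)),
          #{r ∈ B | r.2 < fstar F (g.1 *ᵥ (ZMod.castHom hkK (ZMod (p ^ k)) ∘ r.1))} := by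
        simp_rw [card_filter, h, smul_eq_mul]
        rw [← mul_sum, sum_comm]
    _ ≤ #P * ∑ _g : GL (Fin n) (ZMod (p ^ k)), ∑ x, #(exponentsDegreeLT (Fin n) (F x)) :=
        Nat.mul_le_mul_left _
          (sum_le_sum fun g _ => card_filter_lt_fstar_mulVec_le hk hkK hB hi F g)
    _ = _ := by
        rw [sum_const, card_univ, smul_eq_mul, mul_left_comm]

end UpperBound

lemma isPrimitiveVec_newtonRow (p Q : ℕ) [Fact p.Prime] {m : ℕ} (j : Fin (m + 1) →₀ ℕ) :
    IsPrimitiveVec (newtonRow p Q j).1 :=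
  ⟨Pi.single 0 1, by simp [newtonRow, Pi.single_apply]⟩

/-- Count the Newton rows of the exponents of degree less than `⌈M / L⌉`. -/
lemma pow_le_mul_card_filter_lt {p K n : ℕ} [Fact p.Prime] (hn : n ≠ 0)
    {B : Finset ((Fin n → ZMod (p ^ K)) × ℕ)}
    (hspan : ∀ x : (Fin n → ZMod (p ^ K)) × ℕ, IsPrimitiveVec x.1 → x.2 < p ^ K →
      Function.uncurry (chooseRow p) x ∈
        Submodule.span (ZMod p) (Function.uncurry (chooseRow p) '' {b | b ∈ B ∧ b.2 ≤ x.2}))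
    {L M : ℕ} (hL : L ≠ 0) (hML : M ≤ p ^ L) (hMK : M ≤ p ^ K) :
    M ^ n ≤ L ^ n * (n.factorial * #{r ∈ B | r.2 < M}) := by
  obtain ⟨m, rfl⟩ := Nat.exists_eq_succ_of_ne_zero hn
  have hLpos := Nat.pos_of_ne_zero hL
  obtain ⟨s, hs, hMs⟩ : ∃ s, (∀ d < s, L * d < M) ∧ M ≤ L * s :=
    ⟨M ⌈/⌉ L, fun d hd => lt_of_not_ge fun h => hd.not_ge ((ceilDiv_le_iff_le_mul hLpos).mpr h),
      (ceilDiv_le_iff_le_mul hLpos).mp le_rfl⟩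
  have hlt {j} (hj : j ∈ exponentsDegreeLT (Fin (m + 1)) s) : (newtonRow p (p ^ K) j).2 < M :=
    newtonRow_snd_lt hL hML hs (mem_exponentsDegreeLT.mp hj)
  have hcard : #(exponentsDegreeLT (Fin (m + 1)) s) ≤ #{r ∈ B | r.2 < M} := by
    refine card_le_card_of_linearIndepOn_mem_span (K := ZMod p)
      (w := Function.uncurry (chooseRow p))
      (linearIndepOn_newtonRow fun j hj => (hlt hj).trans_le hMK) fun j hj => ?_
    refine Submodule.span_mono (Set.image_mono fun b hb => ?_)
      (hspan _ (isPrimitiveVec_newtonRow p _ j) ((hlt hj).trans_le hMK))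
    exact mem_filter.mpr ⟨hb.1, hb.2.trans_lt (hlt hj)⟩
  calc M ^ (m + 1) ≤ (L * s) ^ (m + 1) := Nat.pow_le_pow_left hMs _
    _ = L ^ (m + 1) * s ^ (m + 1) := mul_pow _ _ _
    _ ≤ L ^ (m + 1) * ((m + 1).factorial * #(exponentsDegreeLT (Fin (m + 1)) s)) := by
        gcongr
        simpa using pow_card_le_card_exponentsDegreeLT (ι := Fin (m + 1)) s
    _ ≤ _ := by gcongr

theorem sum_fstar_pow_le {p k n L : ℕ} [Fact p.Prime] [NeZero (p ^ k)] (hn : n ≠ 0) (hk : k ≠ 0)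
    (hL : L ≠ 0) {P : Finset (Fin n → ZMod (p ^ k))} (hP : IsProjRepSet (p ^ k) n P)
    {f : (Fin n → ZMod (p ^ k)) → ℕ} (hf : n * P.sup (fstar f) ≤ p ^ L) :
    ∑ u ∈ P, fstar f u ^ n ≤ (2 * L) ^ n * #P * ∑ x, f x ^ n := by
  classical
  have hp : p.Prime := Fact.out
  have : NeZero (p ^ (k + L)) := ⟨pow_ne_zero _ hp.ne_zero⟩
  have : Nonempty (Fin n) := ⟨⟨0, Nat.pos_of_ne_zero hn⟩⟩
  obtain ⟨B, hBS, hB, hspan⟩ := exists_linearIndepOn_mem_span_weight_le (K := ZMod p)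
    (Function.uncurry (chooseRow p)) Prod.snd
    {r ∈ (univ : Finset (Fin n → ZMod (p ^ (k + L)))) ×ˢ range (p ^ (k + L)) | IsPrimitiveVec r.1}
  simp only [subset_iff, mem_filter, mem_product, mem_univ, true_and, mem_range] at hBS hspan
  have hupper := sum_card_filter_lt_fstar_le hk (pow_dvd_pow p (Nat.le_add_right k L)) hB
    (fun r hr => (hBS hr).1) (fun r hr => (hBS hr).2) hP fun x => n * f x
  simp_rw [fstar_const_mul] at hupper
  have hlower (u) (hu : u ∈ P) : (n * fstar f u) ^ n ≤
      L ^ n * (n.factorial * #{r ∈ B | r.2 < n * fstar f u}) := by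
    have hM : n * fstar f u ≤ p ^ L := (Nat.mul_le_mul_left n (le_sup hu)).trans hf
    exact pow_le_mul_card_filter_lt hn (fun x hx hxK => hspan x ⟨hxK, hx⟩) hL hM
      (hM.trans (Nat.pow_le_pow_right hp.pos (Nat.le_add_left L k)))
  refine Nat.le_of_mul_le_mul_left (c := n ^ n) ?_ (pow_pos (Nat.pos_of_ne_zero hn) n)
  calc n ^ n * ∑ u ∈ P, fstar f u ^ n = ∑ u ∈ P, (n * fstar f u) ^ n := by
        simp_rw [mul_sum, mul_pow]
    _ ≤ ∑ u ∈ P, L ^ n * (n.factorial * #{r ∈ B | r.2 < n * fstar f u}) := sum_le_sum hlower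
    _ = L ^ n * (n.factorial * ∑ u ∈ P, #{r ∈ B | r.2 < n * fstar f u}) := by
        simp_rw [mul_sum]
    _ ≤ L ^ n * (n.factorial * (#P * ∑ x, #(exponentsDegreeLT (Fin n) (n * f x)))) := by gcongr
    _ = L ^ n * (#P * ∑ x, n.factorial * #(exponentsDegreeLT (Fin n) (n * f x))) := by
        rw [← mul_sum, mul_left_comm #P]
    _ ≤ L ^ n * (#P * ∑ x, (2 * n * f x) ^ n) := by
        gcongr with x
        simpa using card_exponentsDegreeLT_mul_le (ι := Fin n) (f x)
    _ = _ := by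
        simp_rw [mul_pow, ← mul_sum]
        ring

end MaximalFunction

lemma mul_le_pow_of_log_add_log_div_log_le {p a b L : ℕ} (hp : 1 < p)
    (h : (Real.log a + Real.log b) / Real.log p ≤ L) : a * b ≤ p ^ L := by
  rcases Nat.eq_zero_or_pos a with rfl | ha
  · simp
  rcases Nat.eq_zero_or_pos b with rfl | hb
  · simp
  have ha' : (0 : ℝ) < a := by exact_mod_cast ha
  have hb' : (0 : ℝ) < b := by exact_mod_cast hb
  have hp' : (0 : ℝ) < p := by exact_mod_cast hp.pos
  rw [div_le_iff₀ (Real.log_pos (by exact_mod_cast hp)), ← Real.log_mul ha'.ne' hb'.ne',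
    ← Real.log_pow, Real.log_le_log_iff (by positivity) (by positivity)] at h
  exact_mod_cast h

theorem stmt2 (n p k : ℕ) (hn : 1 ≤ n) (hp : p.Prime) (hk : 1 ≤ k)
    (N : ℕ) [NeZero N] (hN : N = p ^ k)
    (P : Finset (Fin n → ZMod N)) (hP : IsProjRepSet N n P)
    (f : (Fin n → ZMod N) → ℕ) (hf : ∃ x, f x ≠ 0) :
    (∑ x : Fin n → ZMod N, (f x : ℝ) ^ n) ≥
      (1 / (2 * ((⌈(Real.log ((P.sup (fstar f) : ℕ) : ℝ) + Real.log n) / Real.log p⌉ : ℤ) : ℝ)) ^ n) *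
      (P.card : ℝ)⁻¹ * ∑ u ∈ P, (fstar f u : ℝ) ^ n := by
  subst hN
  have : Fact p.Prime := ⟨hp⟩
  have hn0 : n ≠ 0 := Nat.one_le_iff_ne_zero.mp hn
  obtain ⟨L, hL⟩ := Int.eq_ofNat_of_zero_le (Int.ceil_nonneg (div_nonneg
    (add_nonneg (Real.log_natCast_nonneg (P.sup (fstar f))) (Real.log_natCast_nonneg n))
    (Real.log_natCast_nonneg p)))
  rw [hL, Int.cast_natCast, ge_iff_le, one_div, ← mul_inv]
  rcases eq_or_ne L 0 with rfl | hL0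
  -- The constant is `1 / 0 = 0`.
  · have hsum : 0 ≤ ∑ x, (f x : ℝ) ^ n := by positivity
    simpa [hn0] using hsum
  · have hsup : P.sup (fstar f) * n ≤ p ^ L :=
      mul_le_pow_of_log_add_log_div_log_le hp.one_lt (by exact_mod_cast Int.ceil_le.mp hL.le)
    have hle := sum_fstar_pow_le hn0 (Nat.one_le_iff_ne_zero.mp hk) hL0 hP (by rwa [mul_comm])
    exact inv_mul_le_of_le_mul₀ (by positivity) (by positivity) (by exact_mod_cast hle)
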